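/- Fix m ≥ 1, a permutation σ of {1,…,m}, and nonnegative integer vectors p, r with p₁+⋯+p_m = r₁+⋯+r_m = n. Consider the map that sends a sequence α of length n to the sequence obtained by listing, for each height h = 1, 2, …, m in increasing order, all steps of α whose starting height is h, in their original left-to-right order. This map restricts to a bijection from 𝒫^σ(p;r) onto 𝒪(p;r), where 𝒪(p;r) denotes ordered sequences with respect to the identity permutation; in particular the two sets have the same cardinality. -/

import Mathlib

/-!
Statement 2: the map sending a sequence to the list of its steps sorted (stably) by starting
height restricts to a bijection from the path sequences `𝒫^σ(p;r)` onto the ordered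
sequences `𝒪(p;r)` (with respect to the identity permutation); in particular the two sets
have the same cardinality.
-/

variable {m : ℕ}

/-- A sequence (list of steps `(i,j)`) has type `(p;r)` if `p h` counts steps with starting
height `h` and `r h` counts steps with ending height `h`. -/
def HasType (p r : Fin m → ℕ) (α : List (Fin m × Fin m)) : Prop :=
  (∀ h, (α.map Prod.fst).count h = p h) ∧ (∀ h, (α.map Prod.snd).count h = r h)

/-- An ordered sequence with respect to `π`: the `π`-preimages of the starting heights are
weakly increasing. -/
def IsOrderedSeq (π : Equiv.Perm (Fin m)) (α : List (Fin m × Fin m)) : Prop :=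
  α.Chain' fun s t => π.symm s.1 ≤ π.symm t.1

/-- A (nonempty) lattice path: each step starts at the ending point of the previous step. -/
def IsLatticePath (α : List (Fin m × Fin m)) : Prop :=
  α ≠ [] ∧ α.Chain' fun s t => s.2 = t.1

/-- A path sequence with respect to `σ`: a concatenation of lattice paths such that for each
constituent path, the `σ`-preimage of its starting height is minimal among the starting heights
of all steps from that point on, and its ending height does not occur as a starting height of
any later step. -/
def IsPathSeq (σ : Equiv.Perm (Fin m)) (α : List (Fin m × Fin m)) : Prop :=
  ∃ L : List (List (Fin m × Fin m)), α = L.flatten ∧ (∀ P ∈ L, IsLatticePath P) ∧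
    ∀ u : Fin L.length,
      (∀ f ∈ (L.get u).head?, ∀ t ∈ (L.drop (u : ℕ)).flatten, σ.symm f.1 ≤ σ.symm t.1) ∧
      (∀ g ∈ (L.get u).getLast?, ∀ t ∈ (L.drop ((u : ℕ) + 1)).flatten, t.1 ≠ g.2)

/-- The map listing, for each height `h = 1, 2, …, m` in increasing order, all steps of `α`
whose starting height is `h`, in their original left-to-right order. -/
def sortBySource (α : List (Fin m × Fin m)) : List (Fin m × Fin m) :=
  (List.finRange m).flatMap fun h => α.filter fun s => s.1 = h

/-- recursive form of the path conditions on a list of paths -/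
def PSRec (σ : Equiv.Perm (Fin m)) : List (List (Fin m × Fin m)) → Prop
  | [] => True
  | P :: L => IsLatticePath P ∧
      (∀ f ∈ P.head?, ∀ t ∈ (P :: L).flatten, σ.symm f.1 ≤ σ.symm t.1) ∧
      (∀ g ∈ P.getLast?, ∀ t ∈ L.flatten, t.1 ≠ g.2) ∧ PSRec σ L

lemma psRec_iff (σ : Equiv.Perm (Fin m)) (L : List (List (Fin m × Fin m))) :
    PSRec σ L ↔ ((∀ P ∈ L, IsLatticePath P) ∧
    ∀ u : Fin L.length,
      (∀ f ∈ (L.get u).head?, ∀ t ∈ (L.drop (u : ℕ)).flatten, σ.symm f.1 ≤ σ.symm t.1) ∧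
      (∀ g ∈ (L.get u).getLast?, ∀ t ∈ (L.drop ((u : ℕ) + 1)).flatten, t.1 ≠ g.2)) := by
  induction L with
  | nil => simp [PSRec]
  | cons P L ih =>
    rw [PSRec, ih]
    constructor
    · rintro ⟨h1, h2, h3, h4, h5⟩
      refine ⟨?_, ?_⟩
      · intro Q hQ
        rcases List.mem_cons.1 hQ with rfl | hQ
        · exact h1
        · exact h4 _ hQ
      · intro u
        refine Fin.cases ?_ ?_ u
        · exact ⟨h2, h3⟩
        · intro v
          exact h5 v
    · rintro ⟨h1, h2⟩
      refine ⟨h1 _ (by simp), (h2 ⟨0, by simp⟩).1, (h2 ⟨0, by simp⟩).2,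
        fun Q hQ => h1 Q (by simp [hQ]), fun v => ?_⟩
      exact h2 (Fin.succ v)

/-- the next step is determined by the current height -/
def NextOK (σ : Equiv.Perm (Fin m)) (c : Option (Fin m)) (s : Fin m × Fin m)
    (α : List (Fin m × Fin m)) : Prop :=
  (∀ h ∈ c, (∃ t ∈ α, t.1 = h) → s.1 = h) ∧
  ((∀ h ∈ c, ∀ t ∈ α, t.1 ≠ h) → ∀ t ∈ α, σ.symm s.1 ≤ σ.symm t.1)

/-- greedy walks -/
def Good (σ : Equiv.Perm (Fin m)) : Option (Fin m) → List (Fin m × Fin m) → Prop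
  | _, [] => True
  | c, s :: α => NextOK σ c s (s :: α) ∧ Good σ (some s.2) α

lemma good_tail (σ : Equiv.Perm (Fin m)) (β : List (Fin m × Fin m))
    (hβ : ∀ c : Option (Fin m), (∀ h ∈ c, ∀ t ∈ β, t.1 ≠ h) → Good σ c β)
    (P : List (Fin m × Fin m)) : ∀ s : Fin m × Fin m,
    (s :: P).IsChain (fun s t => s.2 = t.1) →
    (∀ g ∈ (s :: P).getLast?, ∀ t ∈ β, t.1 ≠ g.2) → Good σ (some s.2) (P ++ β) := by
  induction P with
  | nil =>
    intro s _ h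
    apply hβ
    intro x hx t ht
    obtain rfl : s.2 = x := by simpa using hx
    exact h s (by simp) t ht
  | cons t P ih =>
    intro s hc h
    rw [List.isChain_cons_cons] at hc
    refine ⟨⟨?_, ?_⟩, ih t hc.2 ?_⟩
    · intro x hx _
      obtain rfl : s.2 = x := by simpa using hx
      exact hc.1.symm
    · intro h'
      exact absurd hc.1.symm (h' s.2 rfl t (by simp))
    · intro g hg
      exact h g (by simpa [List.getLast?_cons_cons] using hg)

lemma good_of_psRec (σ : Equiv.Perm (Fin m)) (L : List (List (Fin m × Fin m))) :
    PSRec σ L → ∀ c : Option (Fin m), (∀ h ∈ c, ∀ t ∈ L.flatten, t.1 ≠ h) →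
      Good σ c L.flatten := by
  induction L with
  | nil => intro _ c _; simp [Good]
  | cons P L ih =>
    rintro ⟨⟨hne, hch⟩, h2, h3, h4⟩ c hc
    cases P with
    | nil => exact absurd rfl hne
    | cons s P =>
      rw [List.flatten_cons, List.cons_append] at *
      refine ⟨⟨?_, ?_⟩, good_tail σ _ (ih h4) P s hch h3⟩
      · rintro x hx ⟨t, ht, rfl⟩
        exact absurd rfl (hc _ hx t ht)
      · intro _ t ht
        exact h2 s rfl t ht

lemma psRec_of_good (σ : Equiv.Perm (Fin m)) (α : List (Fin m × Fin m)) :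
    ∀ s : Fin m × Fin m, Good σ (some s.2) α → ∃ P L, α = P ++ L.flatten ∧ PSRec σ L ∧
      (s :: P).IsChain (fun s t => s.2 = t.1) ∧
      (∀ g ∈ (s :: P).getLast?, ∀ t ∈ L.flatten, t.1 ≠ g.2) := by
  induction α with
  | nil => intro s _; exact ⟨[], [], by simp, trivial, by simp, by simp⟩
  | cons t α ih =>
    rintro s ⟨hn, hg⟩
    obtain ⟨P, L, rfl, h1, h2, h3⟩ := ih t hg
    by_cases hs : ∃ u ∈ t :: (P ++ L.flatten), u.1 = s.2
    · refine ⟨t :: P, L, rfl, h1, ?_, ?_⟩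
      · rw [List.isChain_cons_cons]
        exact ⟨(hn.1 s.2 rfl hs).symm, h2⟩
      · intro g hg
        exact h3 g (by simpa [List.getLast?_cons_cons] using hg)
    · push Not at hs
      refine ⟨[], (t :: P) :: L, by simp, ⟨⟨by simp, h2⟩, ?_, h3, h1⟩, by simp, ?_⟩
      · intro f hf u hu
        obtain rfl : t = f := by simpa using hf
        refine hn.2 ?_ u hu
        intro h hh
        obtain rfl : s.2 = h := by simpa using hh
        exact hs
      · intro g hg u hu
        obtain rfl : s = g := by simpa using hg
        exact hs u hu

lemma isPathSeq_iff (σ : Equiv.Perm (Fin m)) (α : List (Fin m × Fin m)) :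
    IsPathSeq σ α ↔ Good σ none α := by
  constructor
  · rintro ⟨L, rfl, h⟩
    exact good_of_psRec σ L ((psRec_iff σ L).2 h) none (by simp)
  · intro h
    suffices ∃ L, α = L.flatten ∧ PSRec σ L by
      obtain ⟨L, h1, h2⟩ := this
      exact ⟨L, h1, (psRec_iff σ L).1 h2⟩
    cases α with
    | nil => exact ⟨[], rfl, trivial⟩
    | cons t α =>
      obtain ⟨hn, hg⟩ := h
      obtain ⟨P, L, rfl, h1, h2, h3⟩ := psRec_of_good σ α t hg
      refine ⟨(t :: P) :: L, by simp, ⟨by simp, h2⟩, ?_, h3, h1⟩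
      intro f hf u hu
      obtain rfl : t = f := by simpa using hf
      exact hn.2 (by simp) u hu

/-- same stacks -/
def SameStacks (α β : List (Fin m × Fin m)) : Prop :=
  ∀ h : Fin m, α.filter (fun s => s.1 = h) = β.filter (fun s => s.1 = h)

lemma SameStacks.mem {α β : List (Fin m × Fin m)} (h : SameStacks α β) (t : Fin m × Fin m) :
    t ∈ α ↔ t ∈ β := by
  have := congrArg (fun l => t ∈ l) (h t.1)
  simpa using this

lemma SameStacks.cons {α β : List (Fin m × Fin m)} {s t : Fin m × Fin m}
    (h : SameStacks (s :: α) (t :: β)) (hst : s.1 = t.1) : s = t ∧ SameStacks α β := by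
  have h0 := h s.1
  have hs : s = t := by
    simp [List.filter_cons, hst] at h0
    exact h0.1
  subst hs
  refine ⟨rfl, fun x => ?_⟩
  have hx := h x
  by_cases hsx : s.1 = x <;> simpa [List.filter_cons, hsx] using hx

lemma good_unique (σ : Equiv.Perm (Fin m)) (α : List (Fin m × Fin m)) :
    ∀ c β, Good σ c α → Good σ c β → SameStacks α β → α = β := by
  induction α with
  | nil =>
    intro c β _ _ h
    cases β with
    | nil => rfl
    | cons t β => exact absurd ((h.mem t).2 (by simp)) (by simp)
  | cons s α ih =>
    intro c β ha hb h
    cases β with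
    | nil => exact absurd ((h.mem s).1 (by simp)) (by simp)
    | cons t β =>
      have hst : s.1 = t.1 := by
        by_cases hc : ∃ x ∈ c, ∃ u ∈ s :: α, u.1 = x
        · obtain ⟨x, hx, u, hu, hux⟩ := hc
          rw [ha.1.1 x hx ⟨u, hu, hux⟩, hb.1.1 x hx ⟨u, (h.mem u).1 hu, hux⟩]
        · push Not at hc
          have h1 := ha.1.2 hc t ((h.mem t).2 (by simp))
          have h2 := hb.1.2 (fun x hx u hu => hc x hx u ((h.mem u).2 hu)) s
            ((h.mem s).1 (by simp))
          exact σ.symm.injective (le_antisymm h1 h2)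
      obtain ⟨rfl, h'⟩ := h.cons hst
      rw [ih _ β ha.2 hb.2 h']

lemma sorted_unique (α : List (Fin m × Fin m)) :
    ∀ β, α.Pairwise (fun s t => s.1 ≤ t.1) → β.Pairwise (fun s t => s.1 ≤ t.1) →
      SameStacks α β → α = β := by
  induction α with
  | nil =>
    intro β _ _ h
    cases β with
    | nil => rfl
    | cons t β => exact absurd ((h.mem t).2 (by simp)) (by simp)
  | cons s α ih =>
    intro β ha hb h
    cases β with
    | nil => exact absurd ((h.mem s).1 (by simp)) (by simp)
    | cons t β =>
      rw [List.pairwise_cons] at ha hb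
      have hst : s.1 = t.1 := by
        apply le_antisymm
        · rcases List.mem_cons.1 ((h.mem t).2 (by simp)) with h1 | h1
          · rw [h1]
          · exact ha.1 _ h1
        · rcases List.mem_cons.1 ((h.mem s).1 (by simp)) with h1 | h1
          · rw [h1]
          · exact hb.1 _ h1
      obtain ⟨rfl, h'⟩ := h.cons hst
      rw [ih β ha.2 hb.2 h']

lemma exists_split (γ : List (Fin m × Fin m)) (h : Fin m) (hex : ∃ t ∈ γ, t.1 = h) :
    ∃ s γ', s.1 = h ∧ γ.length = γ'.length + 1 ∧ SameStacks (s :: γ') γ := by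
  induction γ with
  | nil => simp at hex
  | cons t γ ih =>
    by_cases ht : t.1 = h
    · exact ⟨t, γ, ht, rfl, fun _ => rfl⟩
    · obtain ⟨s, γ', hs, hl, hf⟩ := ih (by
        obtain ⟨u, hu, hu'⟩ := hex
        rcases List.mem_cons.1 hu with rfl | hu
        · exact absurd hu' ht
        · exact ⟨u, hu, hu'⟩)
      refine ⟨s, t :: γ', hs, by simp [hl], fun x => ?_⟩
      have hx := hf x
      subst hs
      by_cases htx : t.1 = x
      · have hsx : ¬ s.1 = x := fun h => ht (htx.trans h.symm)
        simp only [List.filter_cons, htx, hsx, decide_true, decide_false, if_true] at hx ⊢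
        simpa using hx
      · simp only [List.filter_cons, htx, decide_false] at hx ⊢
        simpa using hx

lemma good_exists (σ : Equiv.Perm (Fin m)) (n : ℕ) :
    ∀ (γ : List (Fin m × Fin m)) (c : Option (Fin m)), γ.length = n →
      ∃ α, Good σ c α ∧ SameStacks α γ := by
  induction n with
  | zero =>
    intro γ c h
    obtain rfl := List.length_eq_zero_iff.1 h
    exact ⟨[], trivial, fun _ => rfl⟩
  | succ n ih =>
    intro γ c hl
    have key : ∃ h : Fin m, (∃ t ∈ γ, t.1 = h) ∧ ∀ s : Fin m × Fin m, s.1 = h →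
        NextOK σ c s γ := by
      by_cases hc : ∃ x ∈ c, ∃ u ∈ γ, u.1 = x
      · obtain ⟨x, hx, u, hu, hux⟩ := hc
        refine ⟨x, ⟨u, hu, hux⟩, fun s hs => ⟨fun y hy _ => ?_, fun h' => ?_⟩⟩
        · rw [hs]; exact Option.mem_unique hx hy
        · exact absurd hux (h' x hx u hu)
      · push Not at hc
        have hne : γ.toFinset.Nonempty := by
          rw [List.toFinset_nonempty_iff]
          rintro rfl
          simp at hl
        obtain ⟨t, ht, hmin⟩ := Finset.exists_min_image γ.toFinset
          (fun t => σ.symm t.1) hne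
        refine ⟨t.1, ⟨t, by simpa using ht, rfl⟩, fun s hs => ⟨?_, ?_⟩⟩
        · rintro x hx ⟨u, hu, hux⟩
          exact absurd hux (hc x hx u hu)
        · intro _ u hu
          rw [hs]
          exact hmin u (by simpa using hu)
    obtain ⟨h, hex, hn⟩ := key
    obtain ⟨s, γ', hs, hl', hf⟩ := exists_split γ h hex
    obtain ⟨α, hα, hfα⟩ := ih γ' (some s.2) (by omega)
    have hf2 : SameStacks (s :: α) γ := by
      intro x
      rw [← hf x, List.filter_cons, List.filter_cons, hfα x]
    refine ⟨s :: α, ⟨⟨?_, ?_⟩, hα⟩, hf2⟩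
    · rintro x hx ⟨t, ht, htx⟩
      exact (hn s hs).1 x hx ⟨t, (hf2.mem t).1 ht, htx⟩
    · intro h' t ht
      exact (hn s hs).2 (fun x hx u hu => h' x hx u ((hf2.mem u).2 hu)) t ((hf2.mem t).1 ht)

lemma flatMap_filter_aux (α : List (Fin m × Fin m)) (x : Fin m) (l : List (Fin m))
    (hl : l.Nodup) :
    (l.flatMap fun h => α.filter fun s => s.1 = h).filter (fun s => s.1 = x) =
      if x ∈ l then α.filter (fun s => s.1 = x) else [] := by
  induction l with
  | nil => simp
  | cons a l ih =>
    rw [List.nodup_cons] at hl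
    rw [List.flatMap_cons, List.filter_append, ih hl.2, List.filter_filter]
    by_cases hax : a = x
    · subst hax
      simp [hl.1]
    · have : (α.filter fun s => decide (s.1 = x) && decide (s.1 = a)) = [] := by
        rw [List.filter_eq_nil_iff]
        intro s _
        simp only [Bool.and_eq_true, decide_eq_true_eq]
        rintro ⟨h1, h2⟩
        exact hax (h2.symm.trans h1)
      rw [this]
      have hxa : ¬ x = a := fun h => hax h.symm
      simp [hxa]

lemma sameStacks_sort (α : List (Fin m × Fin m)) : SameStacks (sortBySource α) α := by
  intro x
  rw [sortBySource, flatMap_filter_aux α x _ (List.nodup_finRange m)]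
  simp

lemma SameStacks.perm {α β : List (Fin m × Fin m)} (h : SameStacks α β) : α.Perm β := by
  rw [List.perm_iff_count]
  intro t
  have := congrArg (List.count t) (h t.1)
  rwa [List.count_filter (by simp), List.count_filter (by simp)] at this

lemma SameStacks.hasType {α β : List (Fin m × Fin m)} (h : SameStacks α β)
    {p r : Fin m → ℕ} (ht : HasType p r α) : HasType p r β :=
  ⟨fun x => by rw [← ht.1 x]; exact ((h.perm.map _).count_eq x).symm,
   fun x => by rw [← ht.2 x]; exact ((h.perm.map _).count_eq x).symm⟩

lemma isOrderedSeq_iff (α : List (Fin m × Fin m)) :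
    IsOrderedSeq 1 α ↔ α.Pairwise (fun s t => s.1 ≤ t.1) := by
  haveI : IsTrans (Fin m × Fin m) (fun s t => s.1 ≤ t.1) := ⟨fun _ _ _ h1 h2 => le_trans h1 h2⟩
  exact List.isChain_iff_pairwise (R := fun s t : Fin m × Fin m => s.1 ≤ t.1)

lemma sort_sorted (α : List (Fin m × Fin m)) :
    (sortBySource α).Pairwise (fun s t => s.1 ≤ t.1) := by
  rw [sortBySource, List.pairwise_flatMap]
  constructor
  · intro h _
    apply List.pairwise_of_forall_mem_list
    intro s hs t ht
    simp at hs ht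
    rw [hs.2, ht.2]
  · refine (List.pairwise_lt_finRange m).imp ?_
    intro a b hab s hs t ht
    simp at hs ht
    rw [hs.2, ht.2]
    exact hab.le

theorem sortBySource_bijOn_pathSeq (hm : 1 ≤ m) (σ : Equiv.Perm (Fin m))
    (p r : Fin m → ℕ) (hpr : ∑ i, p i = ∑ i, r i) :
    Set.BijOn sortBySource
      {α : List (Fin m × Fin m) | HasType p r α ∧ IsPathSeq σ α}
      {α : List (Fin m × Fin m) | HasType p r α ∧ IsOrderedSeq 1 α} ∧
    Set.ncard {α : List (Fin m × Fin m) | HasType p r α ∧ IsPathSeq σ α} =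
      Set.ncard {α : List (Fin m × Fin m) | HasType p r α ∧ IsOrderedSeq 1 α} := by
  have key : Set.BijOn sortBySource
      {α : List (Fin m × Fin m) | HasType p r α ∧ IsPathSeq σ α}
      {α : List (Fin m × Fin m) | HasType p r α ∧ IsOrderedSeq 1 α} := by
    refine ⟨?_, ?_, ?_⟩
    · rintro α ⟨ht, _⟩
      refine ⟨SameStacks.hasType (fun x => (sameStacks_sort α x).symm) ht, ?_⟩
      exact (isOrderedSeq_iff _).2 (sort_sorted α)
    · rintro α ⟨_, ha⟩ β ⟨_, hb⟩ hab
      refine good_unique σ α none β ((isPathSeq_iff σ α).1 ha) ((isPathSeq_iff σ β).1 hb) ?_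
      intro x
      rw [← sameStacks_sort α x, ← sameStacks_sort β x, hab]
    · rintro γ ⟨ht, ho⟩
      obtain ⟨α, hα, hf⟩ := good_exists σ γ.length γ none rfl
      refine ⟨α, ⟨SameStacks.hasType (fun x => (hf x).symm) ht, (isPathSeq_iff σ α).2 hα⟩, ?_⟩
      refine sorted_unique _ _ (sort_sorted α) ((isOrderedSeq_iff γ).1 ho) ?_
      intro x
      rw [sameStacks_sort α x, hf x]
  refine ⟨key, ?_⟩
  rw [← key.image_eq, Set.ncard_image_of_injOn key.injOn]
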